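/- (γ-boosting deviation lemma) In the share-model simultaneous first price auction with a mixed Nash equilibrium σ and parameters α > 1, γ > 1, the value derived by bidders in I is comparable to the Liquid Welfare at equilibrium: (1 − 2α/(γ(α−1))) · Σ_{i∈I} Σ_{j=1}^m v_{ij}·q_{ij} ≤ α·REV(σ) + 2·LW(σ) − (1/γ)·Σ_{i∈Ī₃} B_i. -/

import Mathlib

/-!
Share-model simultaneous first price auction with `n` additive budgeted bidders,
`m` items, each divided into `h` identical shares.  Main theorem: for every mixed
Nash equilibrium `σ`, the optimal Liquid Welfare is at most `51.5` times the
expected Liquid Welfare at equilibrium, provided `h ≥ n ≥ 0` and `h ≥ 1`.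
-/

open Finset

/-- A share-model simultaneous first price auction: additive values `v i j ≥ 0`
(each of the `h` shares of item `j` is worth `v i j / h` to bidder `i`), budgets
`B i ≥ 0`, and a deterministic allocation rule `win` awarding every share to a
bidder with the highest bid on it (the winner pays her own bid). -/
structure ShareAuction (n m h : ℕ) where
  v : Fin n → Fin m → ℝ
  v_nonneg : ∀ i j, 0 ≤ v i j
  B : Fin n → ℝ
  B_nonneg : ∀ i, 0 ≤ B i
  win : (Fin n → Fin m → Fin h → ℝ) → Fin m → Fin h → Fin n
  win_max : ∀ (b : Fin n → Fin m → Fin h → ℝ) (j : Fin m) (ℓ : Fin h) (i : Fin n),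
    b i j ℓ ≤ b (win b j ℓ) j ℓ

namespace ShareAuction

variable {n m h : ℕ}

/-- The value bidder `i` derives from the shares she wins under bid profile `b`. -/
noncomputable def val (A : ShareAuction n m h) (i : Fin n) (b : Fin n → Fin m → Fin h → ℝ) : ℝ :=
  ∑ j : Fin m, ∑ ℓ : Fin h, if A.win b j ℓ = i then A.v i j / h else 0

/-- First-price payment: bidder `i` pays her own bid on every share she wins. -/
noncomputable def pay (A : ShareAuction n m h) (i : Fin n) (b : Fin n → Fin m → Fin h → ℝ) : ℝ :=
  ∑ j : Fin m, ∑ ℓ : Fin h, if A.win b j ℓ = i then b i j ℓ else 0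

/-- Quasilinear utility. -/
noncomputable def util (A : ShareAuction n m h) (i : Fin n) (b : Fin n → Fin m → Fin h → ℝ) : ℝ :=
  A.val i b - A.pay i b

end ShareAuction

/-- A mixed bid profile: a product distribution, bidder `i` placing probability
`p i k` on the (nonnegative) bid vector `β i k`, with finite support `Fin (K i)`. -/
structure MixedProfile (n m h : ℕ) where
  K : Fin n → ℕ
  p : ∀ i, Fin (K i) → ℝ
  p_nonneg : ∀ i k, 0 ≤ p i k
  p_sum : ∀ i, ∑ k, p i k = 1
  β : ∀ i, Fin (K i) → Fin m → Fin h → ℝ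
  β_nonneg : ∀ i k j ℓ, 0 ≤ β i k j ℓ

namespace MixedProfile

variable {n m h : ℕ}

/-- Probability of the sample point `ω` of the product distribution. -/
noncomputable def prob (σ : MixedProfile n m h) (ω : ∀ i, Fin (σ.K i)) : ℝ := ∏ i, σ.p i (ω i)

/-- The pure bid profile realized at sample point `ω`. -/
def bids (σ : MixedProfile n m h) (ω : ∀ i, Fin (σ.K i)) :
    Fin n → Fin m → Fin h → ℝ :=
  fun i => σ.β i (ω i)

/-- Expectation of a function of the bid profile under `σ`. -/
noncomputable def expect (σ : MixedProfile n m h)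
    (f : (Fin n → Fin m → Fin h → ℝ) → ℝ) : ℝ :=
  ∑ ω : ∀ i, Fin (σ.K i), σ.prob ω * f (σ.bids ω)

end MixedProfile

/-- `σ` is a mixed Nash equilibrium: payments stay within budgets almost surely,
and no bidder can profit in expectation by deviating to any deterministic
nonnegative bid vector whose bids sum to at most her budget. -/
def IsMixedNash {n m h : ℕ} (A : ShareAuction n m h) (σ : MixedProfile n m h) : Prop :=
  (∀ i (ω : ∀ i, Fin (σ.K i)), σ.prob ω ≠ 0 → A.pay i (σ.bids ω) ≤ A.B i) ∧
  ∀ i (b' : Fin m → Fin h → ℝ), (∀ j ℓ, 0 ≤ b' j ℓ) →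
    (∑ j : Fin m, ∑ ℓ : Fin h, b' j ℓ) ≤ A.B i →
    σ.expect (A.util i) ≥
      ∑ ω : ∀ i, Fin (σ.K i), σ.prob ω * A.util i (Function.update (σ.bids ω) i b')

/-- Expected Liquid Welfare of a mixed profile. -/
noncomputable def LW {n m h : ℕ} (A : ShareAuction n m h) (σ : MixedProfile n m h) : ℝ :=
  ∑ i, σ.expect (fun b => min (A.val i b) (A.B i))

/-- The value bidder `i` derives from a deterministic allocation of shares. -/
noncomputable def allocVal {n m h : ℕ} (A : ShareAuction n m h) (i : Fin n)
    (alloc : Fin m → Fin h → Fin n) : ℝ :=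
  ∑ j : Fin m, ∑ ℓ : Fin h, if alloc j ℓ = i then A.v i j / h else 0

section Quantities

variable {n m h : ℕ}

/-- The winning bid `p_j^ℓ(b) = max_i b_{ij}^ℓ` on share `ℓ` of item `j`
(the winner's bid, which is maximal by `win_max`). -/
noncomputable def wbid (A : ShareAuction n m h) (b : Fin n → Fin m → Fin h → ℝ)
    (j : Fin m) (ℓ : Fin h) : ℝ :=
  b (A.win b j ℓ) j ℓ

/-- Item price `p̄_j = α · Σ_ℓ E_{b∼σ}[p_j^ℓ(b)]`. -/
noncomputable def pbar (A : ShareAuction n m h) (σ : MixedProfile n m h) (α : ℝ)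
    (j : Fin m) : ℝ :=
  α * σ.expect (fun b => ∑ ℓ : Fin h, wbid A b j ℓ)

/-- Expected revenue `REV(σ) = (1/α) Σ_j p̄_j`. -/
noncomputable def REV (A : ShareAuction n m h) (σ : MixedProfile n m h) (α : ℝ) : ℝ :=
  (1 / α) * ∑ j : Fin m, pbar A σ α j

/-- `q i j`: expected fraction of the `h` shares of item `j` won by bidder `i`. -/
noncomputable def q (A : ShareAuction n m h) (σ : MixedProfile n m h)
    (i : Fin n) (j : Fin m) : ℝ :=
  σ.expect (fun b => (∑ ℓ : Fin h, if A.win b j ℓ = i then (1 : ℝ) else 0) / h)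

/-- `Q i = Pr_{b∼σ}[v_i(x_i(b)) ≥ B_i]`. -/
noncomputable def Qbig (A : ShareAuction n m h) (σ : MixedProfile n m h) (i : Fin n) : ℝ :=
  ∑ ω : ∀ i, Fin (σ.K i), if A.B i ≤ A.val i (σ.bids ω) then σ.prob ω else 0

/-- High value items `J_i = {j : v_{ij} ≥ p̄_j}`. -/
noncomputable def Jset (A : ShareAuction n m h) (σ : MixedProfile n m h) (α : ℝ)
    (i : Fin n) : Finset (Fin m) :=
  univ.filter fun j => pbar A σ α j ≤ A.v i j

/-- `I₁ = {i : γ · Σ_{j ∈ J_i} p̄_j q_{ij} ≤ B_i}`. -/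
noncomputable def I1 (A : ShareAuction n m h) (σ : MixedProfile n m h) (α γ : ℝ) :
    Finset (Fin n) :=
  univ.filter fun i => γ * ∑ j ∈ Jset A σ α i, pbar A σ α j * q A σ i j ≤ A.B i

/-- `I₂ = {i : Σ_j p̄_j / h ≤ B_i}`. -/
noncomputable def I2 (A : ShareAuction n m h) (σ : MixedProfile n m h) (α : ℝ) :
    Finset (Fin n) :=
  univ.filter fun i => (∑ j : Fin m, pbar A σ α j / h) ≤ A.B i

/-- `I₃ = {i : Q_i ≤ 1/(2γ)}`. -/
noncomputable def I3 (A : ShareAuction n m h) (σ : MixedProfile n m h) (γ : ℝ) :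
    Finset (Fin n) :=
  univ.filter fun i => Qbig A σ i ≤ 1 / (2 * γ)

/-- `I = I₁ ∩ I₂ ∩ I₃`. -/
noncomputable def Iset (A : ShareAuction n m h) (σ : MixedProfile n m h) (α γ : ℝ) :
    Finset (Fin n) :=
  I1 A σ α γ ∩ I2 A σ α ∩ I3 A σ γ

end Quantities

/-!
Fix a bidder `i ∈ I`. Bidding just around `p̄_j / h` on one share of item `j` beats the winning bid
with probability about `1 - 1/α` on an average share, by Markov's inequality. Hence, for fractions
`x_j ∈ [0, 1]` that are affordable at prices `p̄_j`, bidder `i` can secure half of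
`(1 - 1/α) ∑ x_j (v_{ij} - p̄_j)`: one deviation buys `x_j h` shares of each item, rounded down, and
a second one, affordable for `i ∈ I₂`, a single share of each, which makes up for the rounding. The
boosted fractions `x_j = γ q_{ij}` are affordable for `i ∈ I₁`, and since the equilibrium utility is
at most `∑ v_{ij} q_{ij}`, this bounds the surplus `(v_{ij} - p̄_j) q_{ij}` from the items with
`p̄_j < v_{ij}` and `γ q_{ij} ≤ 1`.

The prices `p̄_j q_{ij}` are covered by the revenue. On an item with `γ q_{ij} > 1`, we have
`q_{ij} ≥ 2 Q_i` for `i ∈ I₃`, so at least half of `q_{ij}` is won while the value of `i` is below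
her budget, where it counts in full for the Liquid Welfare. Finally, a bidder outside `I₃` exhausts
her budget with probability above `1 / (2γ)`, so she contributes at least `B_i / (2γ)` to the Liquid
Welfare.
-/

theorem exists_subset_card_eq_mul_sum_le {ι R : Type*} [CommRing R] [LinearOrder R]
    [IsStrictOrderedRing R] (s : Finset ι) (w : ι → R) {k : ℕ} (hk : k ≤ #s) :
    ∃ t ⊆ s, #t = k ∧ k * ∑ a ∈ s, w a ≤ #s * ∑ a ∈ t, w a := by
  classical
  induction hk using Nat.decreasingInduction with
  | self => exact ⟨s, Subset.rfl, rfl, le_rfl⟩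
  | of_succ k _ ih =>
    obtain ⟨t, hts, htk, ht⟩ := ih
    obtain ⟨a, ha, hmin⟩ := t.exists_min_image w (card_pos.1 (by lia))
    refine ⟨t.erase a, (erase_subset a t).trans hts, by simp [ha, htk], ?_⟩
    have herase : ∑ b ∈ t.erase a, w b = ∑ b ∈ t, w b - w a := sum_erase_eq_sub ha
    have hmin_le : (k + 1) * w a ≤ ∑ b ∈ t, w b := by
      simpa [htk] using card_nsmul_le_sum t w (w a) hmin
    push_cast at ht
    refine le_of_mul_le_mul_left ?_ (by positivity : (0 : R) < k + 1)
    calc (k + 1) * (k * ∑ b ∈ s, w b)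
        = k * ((k + 1) * ∑ b ∈ s, w b) := by ring
      _ ≤ k * (#s * ∑ b ∈ t, w b) := by gcongr
      _ = #s * ((k + 1) * ∑ b ∈ t, w b - ∑ b ∈ t, w b) := by ring
      _ ≤ #s * ((k + 1) * ∑ b ∈ t, w b - (k + 1) * w a) := by gcongr
      _ = (k + 1) * (#s * ∑ b ∈ t.erase a, w b) := by rw [herase]; ring

theorem sum_mul_le_sum_floor_mul_add {ι R : Type*} [Semiring R] [LinearOrder R]
    [IsStrictOrderedRing R] [FloorSemiring R] {s : Finset ι} {x c : ι → R}
    (hc : ∀ a ∈ s, 0 ≤ c a) :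
    ∑ a ∈ s, x a * c a ≤ ∑ a ∈ s, ⌊x a⌋₊ * c a + ∑ a ∈ s, c a := by
  rw [← sum_add_distrib]
  refine sum_le_sum fun a ha => ?_
  calc x a * c a ≤ (⌊x a⌋₊ + 1) * c a :=
        mul_le_mul_of_nonneg_right (Nat.lt_floor_add_one _).le (hc a ha)
    _ = ⌊x a⌋₊ * c a + c a := add_one_mul _ _

namespace MixedProfile

variable {n m h : ℕ} (σ : MixedProfile n m h) {f g : (Fin n → Fin m → Fin h → ℝ) → ℝ}

theorem prob_nonneg (ω : ∀ i, Fin (σ.K i)) : 0 ≤ σ.prob ω :=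
  prod_nonneg fun i _ => σ.p_nonneg i (ω i)

theorem sum_prob : ∑ ω, σ.prob ω = 1 := by
  simp only [prob, ← Fintype.prod_sum, σ.p_sum, prod_const_one]

theorem expect_mono (hfg : ∀ b, (∀ i j ℓ, 0 ≤ b i j ℓ) → f b ≤ g b) :
    σ.expect f ≤ σ.expect g :=
  sum_le_sum fun ω _ =>
    mul_le_mul_of_nonneg_left (hfg _ fun i => σ.β_nonneg i (ω i)) (σ.prob_nonneg ω)

@[simp]
theorem expect_const (c : ℝ) : σ.expect (fun _ => c) = c := by
  simp only [expect, ← sum_mul, sum_prob, one_mul]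

theorem expect_nonneg (hf : ∀ b, (∀ i j ℓ, 0 ≤ b i j ℓ) → 0 ≤ f b) : 0 ≤ σ.expect f := by
  simpa using σ.expect_mono (f := fun _ => 0) hf

theorem expect_sub : σ.expect (fun b => f b - g b) = σ.expect f - σ.expect g := by
  simp only [expect, mul_sub, sum_sub_distrib]

theorem expect_const_mul (c : ℝ) : σ.expect (fun b => c * f b) = c * σ.expect f := by
  simp only [expect, mul_sum, mul_left_comm]

theorem expect_sum {ι : Type*} (s : Finset ι) (F : ι → (Fin n → Fin m → Fin h → ℝ) → ℝ) :
    σ.expect (fun b => ∑ a ∈ s, F a b) = ∑ a ∈ s, σ.expect (F a) := by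
  simp only [expect, mul_sum]
  exact sum_comm

end MixedProfile

namespace ShareAuction

variable {n m h : ℕ} (A : ShareAuction n m h) (i : Fin n) (j : Fin m)
  (b : Fin n → Fin m → Fin h → ℝ)

/-- The fraction of the `h` shares of item `j` that bidder `i` wins under the bid profile `b`; its
expectation is `q`. -/
noncomputable def wonFraction : ℝ :=
  (∑ ℓ : Fin h, if A.win b j ℓ = i then (1 : ℝ) else 0) / h

theorem wonFraction_nonneg : 0 ≤ A.wonFraction i j b := by
  unfold wonFraction
  positivity

theorem sum_wonFraction_le_one : ∑ i, A.wonFraction i j b ≤ 1 := by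
  simp only [wonFraction, ← sum_div]
  rw [sum_comm]
  simpa using div_self_le_one (h : ℝ)

theorem wonFraction_le_one : A.wonFraction i j b ≤ 1 :=
  (single_le_sum (fun i _ => A.wonFraction_nonneg i j b) (mem_univ i)).trans
    (A.sum_wonFraction_le_one j b)

theorem val_eq_sum_mul_wonFraction : A.val i b = ∑ j, A.v i j * A.wonFraction i j b := by
  simp only [val, wonFraction, mul_div_assoc', mul_sum, sum_div, mul_ite, mul_one, mul_zero,
    ite_div, zero_div]

theorem val_nonneg : 0 ≤ A.val i b := by
  rw [val_eq_sum_mul_wonFraction]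
  exact sum_nonneg fun j _ => mul_nonneg (A.v_nonneg i j) (A.wonFraction_nonneg i j b)

variable {i j b}

theorem pay_nonneg (hb : ∀ j ℓ, 0 ≤ b i j ℓ) : 0 ≤ A.pay i b :=
  sum_nonneg fun j _ => sum_nonneg fun ℓ _ => ite_nonneg (hb j ℓ) le_rfl

theorem util_le_val (hb : ∀ j ℓ, 0 ≤ b i j ℓ) : A.util i b ≤ A.val i b :=
  sub_le_self _ (A.pay_nonneg hb)

variable {ℓ : Fin h} {x : Fin m → Fin h → ℝ}

theorem win_update_of_wbid_lt (hx : wbid A b j ℓ < x j ℓ) :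
    A.win (Function.update b i x) j ℓ = i := by
  by_contra hne
  have hmax := A.win_max (Function.update b i x) j ℓ i
  rw [Function.update_self, Function.update_of_ne hne] at hmax
  exact (hx.trans_le hmax).not_ge (A.win_max b j ℓ _)

theorem util_update : A.util i (Function.update b i x) =
    ∑ j, ∑ ℓ, if A.win (Function.update b i x) j ℓ = i then A.v i j / h - x j ℓ else 0 := by
  simp only [util, val, pay, ← sum_sub_distrib, Function.update_self]
  exact sum_congr rfl fun j _ => sum_congr rfl fun ℓ _ => by split_ifs <;> simp

theorem sum_le_util_update (hx : ∀ j ℓ, x j ℓ ≤ A.v i j / h) :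
    ∑ j, ∑ ℓ, (if wbid A b j ℓ < x j ℓ then A.v i j / h - x j ℓ else 0) ≤
      A.util i (Function.update b i x) := by
  rw [util_update]
  refine sum_le_sum fun j _ => sum_le_sum fun ℓ _ => ?_
  split_ifs with hlt hwin hwin
  · exact le_rfl
  · exact absurd (A.win_update_of_wbid_lt hlt) hwin
  · exact sub_nonneg.2 (hx j ℓ)
  · exact le_rfl

end ShareAuction

section

variable {n m h : ℕ} (A : ShareAuction n m h) (σ : MixedProfile n m h)

theorem pbar_nonneg {α : ℝ} (hα : 0 ≤ α) (j : Fin m) : 0 ≤ pbar A σ α j :=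
  mul_nonneg hα <| σ.expect_nonneg fun _ hb => sum_nonneg fun ℓ _ => hb _ j ℓ

theorem q_nonneg (i : Fin n) (j : Fin m) : 0 ≤ q A σ i j :=
  σ.expect_nonneg fun b _ => A.wonFraction_nonneg i j b

theorem sum_q_le_one (j : Fin m) : ∑ i, q A σ i j ≤ 1 := by
  calc ∑ i, q A σ i j = σ.expect (fun b => ∑ i, A.wonFraction i j b) := (σ.expect_sum univ _).symm
    _ ≤ σ.expect (fun _ => 1) := σ.expect_mono fun b _ => A.sum_wonFraction_le_one j b
    _ = 1 := σ.expect_const 1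

theorem expect_val (i : Fin n) : σ.expect (A.val i) = ∑ j, A.v i j * q A σ i j := by
  simp only [funext (A.val_eq_sum_mul_wonFraction i), σ.expect_sum, σ.expect_const_mul]
  rfl

theorem expect_util_le (i : Fin n) : σ.expect (A.util i) ≤ ∑ j, A.v i j * q A σ i j :=
  (σ.expect_mono fun _ hb => A.util_le_val (hb i)).trans_eq (expect_val A σ i)

theorem Qbig_eq_expect (i : Fin n) :
    Qbig A σ i = σ.expect (fun b => if A.B i ≤ A.val i b then 1 else 0) := by
  simp only [Qbig, MixedProfile.expect, mul_ite, mul_one, mul_zero]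

theorem budget_pos_of_Qbig_lt_one {i : Fin n} (hQ : Qbig A σ i < 1) : 0 < A.B i := by
  refine (A.B_nonneg i).lt_of_ne' fun hB => hQ.ne ?_
  simp [Qbig_eq_expect, hB, A.val_nonneg]

/-- The contribution of bidder `i` to the expected Liquid Welfare, `E[min {v_i(x_i(b)), B_i}]`. -/
noncomputable def liquidValue (i : Fin n) : ℝ :=
  σ.expect fun b => min (A.val i b) (A.B i)

theorem liquidValue_nonneg (i : Fin n) : 0 ≤ liquidValue A σ i :=
  σ.expect_nonneg fun b _ => le_min (A.val_nonneg i b) (A.B_nonneg i)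

theorem Qbig_mul_budget_le_liquidValue (i : Fin n) :
    Qbig A σ i * A.B i ≤ liquidValue A σ i := by
  rw [Qbig_eq_expect, mul_comm, ← σ.expect_const_mul]
  refine σ.expect_mono fun b _ => ?_
  split_ifs with hle
  · rw [mul_one, min_eq_right hle]
  · rw [mul_zero]
    exact le_min (A.val_nonneg i b) (A.B_nonneg i)

theorem sum_mul_q_sub_Qbig_le_liquidValue (i : Fin n) (S : Finset (Fin m)) :
    ∑ j ∈ S, A.v i j * (q A σ i j - Qbig A σ i) ≤ liquidValue A σ i := by
  have hexpect : ∑ j ∈ S, A.v i j * (q A σ i j - Qbig A σ i) = σ.expect fun b =>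
      ∑ j ∈ S, A.v i j * (A.wonFraction i j b - if A.B i ≤ A.val i b then 1 else 0) := by
    simp only [σ.expect_sum, σ.expect_const_mul, σ.expect_sub, ← Qbig_eq_expect]
    rfl
  rw [hexpect]
  refine σ.expect_mono fun b _ => ?_
  split_ifs with hle
  · exact (sum_nonpos fun j _ => mul_nonpos_of_nonneg_of_nonpos (A.v_nonneg i j)
      (sub_nonpos.2 (A.wonFraction_le_one i j b))).trans
      (le_min (A.val_nonneg i b) (A.B_nonneg i))
  · rw [min_eq_left (not_le.1 hle).le, A.val_eq_sum_mul_wonFraction]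
    simp only [sub_zero]
    exact sum_le_univ_sum_of_nonneg fun j =>
      mul_nonneg (A.v_nonneg i j) (A.wonFraction_nonneg i j b)

theorem sum_mul_q_le_two_mul_liquidValue {i : Fin n} {S : Finset (Fin m)}
    (hS : ∀ j ∈ S, 2 * Qbig A σ i ≤ q A σ i j) :
    ∑ j ∈ S, A.v i j * q A σ i j ≤ 2 * liquidValue A σ i := by
  calc ∑ j ∈ S, A.v i j * q A σ i j
      ≤ ∑ j ∈ S, 2 * (A.v i j * (q A σ i j - Qbig A σ i)) :=
        sum_le_sum fun j hj => by
          linarith [mul_le_mul_of_nonneg_left (hS j hj) (A.v_nonneg i j)]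
    _ ≤ 2 * liquidValue A σ i := by
        rw [← mul_sum]
        gcongr
        exact sum_mul_q_sub_Qbig_le_liquidValue A σ i S

/-- The probability that the winning bid on share `ℓ` of item `j` is strictly below `d`, so that a
bidder deviating to `d` wins the share however ties are broken. -/
noncomputable def underbidProb (j : Fin m) (ℓ : Fin h) (d : ℝ) : ℝ :=
  σ.expect fun b => if wbid A b j ℓ < d then 1 else 0

theorem underbidProb_nonneg (j : Fin m) (ℓ : Fin h) (d : ℝ) : 0 ≤ underbidProb A σ j ℓ d :=
  σ.expect_nonneg fun _ _ => ite_nonneg zero_le_one le_rfl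

theorem mul_one_sub_underbidProb_le (j : Fin m) (ℓ : Fin h) (d : ℝ) :
    d * (1 - underbidProb A σ j ℓ d) ≤ σ.expect (wbid A · j ℓ) := by
  have hexpect : d * (1 - underbidProb A σ j ℓ d) =
      σ.expect fun b => d * (1 - if wbid A b j ℓ < d then 1 else 0) := by
    simp only [σ.expect_const_mul, σ.expect_sub, σ.expect_const, underbidProb]
  rw [hexpect]
  refine σ.expect_mono fun b hb => ?_
  split_ifs with hlt
  · rw [sub_self, mul_zero]
    exact hb _ j ℓ
  · rw [sub_zero, mul_one]
    exact not_lt.1 hlt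

theorem mul_one_sub_pbar_div_le_sum_underbidProb (hh : 0 < h) {α d : ℝ} (hα : α ≠ 0) (hd : 0 < d)
    (j : Fin m) : h * (1 - pbar A σ α j / (α * h * d)) ≤ ∑ ℓ, underbidProb A σ j ℓ d := by
  have hmarkov : d * (h - ∑ ℓ, underbidProb A σ j ℓ d) ≤ pbar A σ α j / α := by
    calc d * (h - ∑ ℓ, underbidProb A σ j ℓ d)
        = ∑ ℓ, d * (1 - underbidProb A σ j ℓ d) := by simp [← mul_sum, sum_sub_distrib]
      _ ≤ ∑ ℓ, σ.expect (wbid A · j ℓ) :=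
        sum_le_sum fun ℓ _ => mul_one_sub_underbidProb_le A σ j ℓ d
      _ = pbar A σ α j / α := by rw [pbar, mul_div_cancel_left₀ _ hα, σ.expect_sum]
  have hh' : (h : ℝ) ≠ 0 := by positivity
  have hcancel : h * (1 - pbar A σ α j / (α * h * d)) = h - pbar A σ α j / α / d := by
    field_simp
  rw [hcancel, sub_le_comm, le_div_iff₀' hd]
  exact hmarkov

theorem exists_shares_mul_le_sum_underbidProb (hh : 0 < h) {α d : ℝ} (hα : α ≠ 0) (hd : 0 < d)
    (j : Fin m) {k : ℕ} (hk : k ≤ h) : ∃ T : Finset (Fin h), #T = k ∧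
      k * (1 - pbar A σ α j / (α * h * d)) ≤ ∑ ℓ ∈ T, underbidProb A σ j ℓ d := by
  obtain ⟨T, -, hTk, hT⟩ := exists_subset_card_eq_mul_sum_le univ
    (underbidProb A σ j · d) (k := k) (by simpa using hk)
  refine ⟨T, hTk, le_of_mul_le_mul_left ?_ (Nat.cast_pos.2 hh : (0 : ℝ) < h)⟩
  calc (h : ℝ) * (k * (1 - pbar A σ α j / (α * h * d)))
      = k * (h * (1 - pbar A σ α j / (α * h * d))) := by ring
    _ ≤ k * ∑ ℓ, underbidProb A σ j ℓ d := by
        gcongr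
        exact mul_one_sub_pbar_div_le_sum_underbidProb A σ hh hα hd j
    _ ≤ h * ∑ ℓ ∈ T, underbidProb A σ j ℓ d := by simpa using hT

/-- A bid on a share of item `j` that tends to `p̄_j / h` as `t → 1`. The summand `(1 - t) * C`
makes it positive even at price `0`, where ties have to be beaten, and the factor `t` on the price
frees the budget for that summand. -/
noncomputable def perturbedBid (α C t : ℝ) (j : Fin m) : ℝ :=
  t * (pbar A σ α j / h) + (1 - t) * C

/-- No deterministic deviation within her budget is profitable for bidder `i` against `σ`: the
equilibrium condition of `IsMixedNash` for a single bidder. -/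
def IsBestResponse (i : Fin n) : Prop :=
  ∀ x : Fin m → Fin h → ℝ, (∀ j ℓ, 0 ≤ x j ℓ) → ∑ j, ∑ ℓ, x j ℓ ≤ A.B i →
    σ.expect (fun b => A.util i (Function.update b i x)) ≤ σ.expect (A.util i)

end

namespace IsBestResponse

variable {n m h : ℕ} {A : ShareAuction n m h} {σ : MixedProfile n m h} {i : Fin n} {α : ℝ}
  {J : Finset (Fin m)} {k : Fin m → ℕ}

theorem sum_mul_underbidProb_le (hbr : IsBestResponse A σ i) {x : Fin m → Fin h → ℝ}
    (hx₀ : ∀ j ℓ, 0 ≤ x j ℓ) (hxv : ∀ j ℓ, x j ℓ ≤ A.v i j / h) (hxB : ∑ j, ∑ ℓ, x j ℓ ≤ A.B i) :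
    ∑ j, ∑ ℓ, (A.v i j / h - x j ℓ) * underbidProb A σ j ℓ (x j ℓ) ≤ σ.expect (A.util i) := by
  refine le_trans (le_of_eq ?_)
    ((σ.expect_mono fun b _ => A.sum_le_util_update hxv).trans (hbr x hx₀ hxB))
  simp only [σ.expect_sum, underbidProb, ← σ.expect_const_mul, mul_ite, mul_one, mul_zero]

theorem sum_shares_mul_underbidProb_le (hbr : IsBestResponse A σ i) {T : Fin m → Finset (Fin h)}
    {d : Fin m → ℝ} (hd : ∀ j ∈ J, 0 ≤ d j) (hdv : ∀ j ∈ J, d j ≤ A.v i j / h)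
    (hdB : ∑ j ∈ J, #(T j) * d j ≤ A.B i) :
    ∑ j ∈ J, (A.v i j / h - d j) * ∑ ℓ ∈ T j, underbidProb A σ j ℓ (d j) ≤
      σ.expect (A.util i) := by
  let x : Fin m → Fin h → ℝ := fun j ℓ => if j ∈ J ∧ ℓ ∈ T j then d j else 0
  have hx_mem : ∀ j ∈ J, ∀ ℓ ∈ T j, x j ℓ = d j := fun j hj ℓ hℓ => if_pos ⟨hj, hℓ⟩
  have hx₀ : ∀ j ℓ, 0 ≤ x j ℓ := fun j ℓ => by
    simp only [x]
    split_ifs with hj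
    exacts [hd j hj.1, le_rfl]
  have hxv : ∀ j ℓ, x j ℓ ≤ A.v i j / h := fun j ℓ => by
    simp only [x]
    split_ifs with hj
    exacts [hdv j hj.1, div_nonneg (A.v_nonneg i j) h.cast_nonneg]
  have hx_sum : ∑ j, ∑ ℓ, x j ℓ = ∑ j ∈ J, #(T j) * d j := by
    simp only [x, ite_and, sum_ite_irrel, sum_const_zero, sum_ite_mem, univ_inter, sum_const,
      nsmul_eq_mul]
  have hterm_nonneg : ∀ j ℓ, 0 ≤ (A.v i j / h - x j ℓ) * underbidProb A σ j ℓ (x j ℓ) :=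
    fun j ℓ => mul_nonneg (sub_nonneg.2 (hxv j ℓ)) (underbidProb_nonneg A σ j ℓ _)
  calc ∑ j ∈ J, (A.v i j / h - d j) * ∑ ℓ ∈ T j, underbidProb A σ j ℓ (d j)
      = ∑ j ∈ J, ∑ ℓ ∈ T j, (A.v i j / h - x j ℓ) * underbidProb A σ j ℓ (x j ℓ) := by
        refine sum_congr rfl fun j hj => ?_
        rw [mul_sum]
        exact sum_congr rfl fun ℓ hℓ => by rw [hx_mem j hj ℓ hℓ]
    _ ≤ ∑ j, ∑ ℓ, (A.v i j / h - x j ℓ) * underbidProb A σ j ℓ (x j ℓ) :=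
        (sum_le_sum fun j _ => sum_le_univ_sum_of_nonneg (hterm_nonneg j)).trans
          (sum_le_univ_sum_of_nonneg fun j => sum_nonneg fun ℓ _ => hterm_nonneg j ℓ)
    _ ≤ σ.expect (A.util i) := hbr.sum_mul_underbidProb_le hx₀ hxv (hx_sum.trans_le hdB)

theorem sum_mul_one_sub_pbar_div_le (hbr : IsBestResponse A σ i) (hh : 0 < h) (hα : α ≠ 0)
    {d : Fin m → ℝ} (hk : ∀ j ∈ J, k j ≤ h) (hd : ∀ j ∈ J, 0 < d j)
    (hdv : ∀ j ∈ J, d j ≤ A.v i j / h) (hdB : ∑ j ∈ J, k j * d j ≤ A.B i) :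
    ∑ j ∈ J, (A.v i j / h - d j) * (k j * (1 - pbar A σ α j / (α * h * d j))) ≤
      σ.expect (A.util i) := by
  choose! T hTk hT using fun j hj =>
    exists_shares_mul_le_sum_underbidProb A σ hh hα (hd j hj) j (hk j hj)
  have hTB : ∑ j ∈ J, #(T j) * d j ≤ A.B i :=
    (sum_congr rfl fun j hj => by rw [hTk j hj]).trans_le hdB
  refine (sum_le_sum fun j hj => ?_).trans
    (hbr.sum_shares_mul_underbidProb_le (fun j hj => (hd j hj).le) hdv hTB)
  exact mul_le_mul_of_nonneg_left (hT j hj) (sub_nonneg.2 (hdv j hj))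

theorem sum_mul_one_sub_inv_le (hbr : IsBestResponse A σ i) (hh : 0 < h) (hα : 0 < α)
    {d : Fin m → ℝ} {t : ℝ} (ht : 0 < t) (hk : ∀ j ∈ J, k j ≤ h) (hd : ∀ j ∈ J, 0 < d j)
    (hdp : ∀ j ∈ J, t * (pbar A σ α j / h) ≤ d j) (hdv : ∀ j ∈ J, d j ≤ A.v i j / h)
    (hdB : ∑ j ∈ J, k j * d j ≤ A.B i) :
    (1 - 1 / (t * α)) * ∑ j ∈ J, k j * (A.v i j / h - d j) ≤ σ.expect (A.util i) := by
  refine le_trans ?_ (hbr.sum_mul_one_sub_pbar_div_le hh hα.ne' hk hd hdv hdB)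
  rw [mul_sum]
  refine sum_le_sum fun j hj => ?_
  have hwin : 1 - 1 / (t * α) ≤ 1 - pbar A σ α j / (α * h * d j) := by
    have hdj := hd j hj
    refine sub_le_sub_left ?_ 1
    rw [div_le_div_iff₀ (by positivity) (by positivity)]
    calc pbar A σ α j * (t * α) = α * h * (t * (pbar A σ α j / h)) := by field_simp
      _ ≤ α * h * d j := by gcongr; exact hdp j hj
      _ = 1 * (α * h * d j) := (one_mul _).symm
  calc (1 - 1 / (t * α)) * (k j * (A.v i j / h - d j))
      = (A.v i j / h - d j) * (k j * (1 - 1 / (t * α))) := by ring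
    _ ≤ (A.v i j / h - d j) * (k j * (1 - pbar A σ α j / (α * h * d j))) := by
        have := sub_nonneg.2 (hdv j hj)
        gcongr

theorem sum_mul_value_sub_perturbedBid_le (hbr : IsBestResponse A σ i) (hh : 0 < h) (hα : 0 < α)
    {C t : ℝ} (hC : 0 < C) (hCB : (∑ j ∈ J, (k j : ℝ)) * C ≤ A.B i) (ht₀ : 0 < t) (ht₁ : t < 1)
    (hk : ∀ j ∈ J, k j ≤ h) (hv : ∀ j ∈ J, perturbedBid A σ α C t j ≤ A.v i j / h)
    (hkB : ∑ j ∈ J, k j * (pbar A σ α j / h) ≤ A.B i) :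
    (1 - 1 / (t * α)) * ∑ j ∈ J, k j * (A.v i j / h - perturbedBid A σ α C t j) ≤
      σ.expect (A.util i) := by
  have hslack : 0 < (1 - t) * C := mul_pos (sub_pos.2 ht₁) hC
  have hscaled : ∀ j, 0 ≤ t * (pbar A σ α j / h) := fun j =>
    mul_nonneg ht₀.le (div_nonneg (pbar_nonneg A σ hα.le j) h.cast_nonneg)
  refine hbr.sum_mul_one_sub_inv_le hh hα ht₀ hk
    (fun j _ => add_pos_of_nonneg_of_pos (hscaled j) hslack)
    (fun j _ => le_add_of_nonneg_right hslack.le) hv ?_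
  calc ∑ j ∈ J, k j * perturbedBid A σ α C t j
      = t * ∑ j ∈ J, k j * (pbar A σ α j / h) + (1 - t) * ((∑ j ∈ J, (k j : ℝ)) * C) := by
        simp only [perturbedBid, mul_sum, sum_mul, ← sum_add_distrib]
        exact sum_congr rfl fun j _ => by ring
    _ ≤ t * A.B i + (1 - t) * A.B i := by gcongr
    _ = A.B i := by ring

open Filter Topology in
theorem sum_mul_value_sub_pbar_le (hbr : IsBestResponse A σ i) (hh : 0 < h) (hα : 0 < α)
    (hB : 0 < A.B i) (hk : ∀ j ∈ J, k j ≤ h) (hJ : ∀ j ∈ J, pbar A σ α j < A.v i j)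
    (hkB : ∑ j ∈ J, k j * (pbar A σ α j / h) ≤ A.B i) :
    (1 - 1 / α) * ∑ j ∈ J, k j * (A.v i j / h - pbar A σ α j / h) ≤ σ.expect (A.util i) := by
  obtain ⟨C, hC, hCB⟩ := exists_pos_mul_lt hB (∑ j ∈ J, (k j : ℝ))
  have hbid_one : ∀ j, perturbedBid A σ α C 1 j = pbar A σ α j / h := fun j => by
    simp [perturbedBid]
  have hbid_cont : ∀ j, Continuous (perturbedBid A σ α C · j) := fun j => by
    unfold perturbedBid
    fun_prop
  have hbid_lt : ∀ᶠ t in 𝓝[<] (1 : ℝ), ∀ j ∈ J, perturbedBid A σ α C t j < A.v i j / h := by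
    refine (eventually_all_finset J).2 fun j hj => ?_
    exact (hbid_cont j).continuousWithinAt.eventually_lt_const <|
      (hbid_one j).trans_lt (div_lt_div_of_pos_right (hJ j hj) (Nat.cast_pos.2 hh))
  have hbound : ∀ᶠ t in 𝓝[<] (1 : ℝ),
      (1 - 1 / (t * α)) * ∑ j ∈ J, k j * (A.v i j / h - perturbedBid A σ α C t j) ≤
        σ.expect (A.util i) := by
    filter_upwards [hbid_lt, Ioo_mem_nhdsLT zero_lt_one] with t hlt ⟨ht₀, ht₁⟩
    exact hbr.sum_mul_value_sub_perturbedBid_le hh hα hC hCB.le ht₀ ht₁ hk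
      (fun j hj => (hlt j hj).le) hkB
  have hcont : ContinuousAt (fun t =>
      (1 - 1 / (t * α)) * ∑ j ∈ J, k j * (A.v i j / h - perturbedBid A σ α C t j)) 1 := by
    have : (1 : ℝ) * α ≠ 0 := by positivity
    fun_prop (disch := assumption)
  simpa only [one_mul, hbid_one] using
    le_of_tendsto (hcont.tendsto.mono_left nhdsWithin_le_nhds) hbound

theorem sum_fraction_mul_value_sub_pbar_le (hbr : IsBestResponse A σ i) (hh : 0 < h) (hα : 1 ≤ α)
    (hB : 0 < A.B i) (hi₂ : i ∈ I2 A σ α) {y : Fin m → ℝ} (hy₀ : ∀ j ∈ J, 0 ≤ y j)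
    (hy₁ : ∀ j ∈ J, y j ≤ 1) (hJ : ∀ j ∈ J, pbar A σ α j < A.v i j)
    (hyB : ∑ j ∈ J, y j * pbar A σ α j ≤ A.B i) :
    (1 - 1 / α) * ∑ j ∈ J, y j * (A.v i j - pbar A σ α j) ≤ 2 * σ.expect (A.util i) := by
  have hα₀ : 0 < α := one_pos.trans_le hα
  have hh' : (0 : ℝ) < h := Nat.cast_pos.2 hh
  have hprice_nonneg : ∀ j, 0 ≤ pbar A σ α j / h := fun j =>
    div_nonneg (pbar_nonneg A σ hα₀.le j) hh'.le
  have hfloor := hbr.sum_mul_value_sub_pbar_le (k := fun j => ⌊y j * h⌋₊) hh hα₀ hB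
    (fun j hj => Nat.floor_le_of_le (mul_le_of_le_one_left hh'.le (hy₁ j hj))) hJ <| by
      refine (sum_le_sum fun j hj => ?_).trans hyB
      calc ⌊y j * h⌋₊ * (pbar A σ α j / h) ≤ y j * h * (pbar A σ α j / h) :=
            mul_le_mul_of_nonneg_right (Nat.floor_le (mul_nonneg (hy₀ j hj) hh'.le))
              (hprice_nonneg j)
        _ = y j * pbar A σ α j := by field_simp
  have hsingle := hbr.sum_mul_value_sub_pbar_le (k := fun _ => 1) hh hα₀ hB (fun _ _ => hh) hJ <| by
    simpa only [Nat.cast_one, one_mul] using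
      (sum_le_univ_sum_of_nonneg hprice_nonneg).trans (mem_filter.1 hi₂).2
  simp only [Nat.cast_one, one_mul] at hsingle
  have hmargin : ∀ j ∈ J, 0 ≤ A.v i j / h - pbar A σ α j / h := fun j hj =>
    sub_nonneg.2 (div_le_div_of_nonneg_right (hJ j hj).le hh'.le)
  have hround : ∑ j ∈ J, y j * (A.v i j - pbar A σ α j) ≤
      ∑ j ∈ J, ⌊y j * h⌋₊ * (A.v i j / h - pbar A σ α j / h) +
        ∑ j ∈ J, (A.v i j / h - pbar A σ α j / h) := by
    refine (sum_congr rfl fun j _ => ?_).trans_le (sum_mul_le_sum_floor_mul_add hmargin)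
    field_simp
  have hcoef : 0 ≤ 1 - 1 / α := sub_nonneg.2 ((div_le_one hα₀).2 hα)
  linarith [mul_le_mul_of_nonneg_left hround hcoef]

end IsBestResponse

section

variable {n m h : ℕ} (A : ShareAuction n m h) (σ : MixedProfile n m h) {α γ : ℝ}

/-- The items on which bidder `i` profits from boosting: they are worth more to her than their
price, and the boosted fraction `γ q_{ij}` does not exceed the whole item. -/
noncomputable def boostableItems (α γ : ℝ) (i : Fin n) : Finset (Fin m) :=
  univ.filter fun j => pbar A σ α j < A.v i j ∧ γ * q A σ i j ≤ 1

variable {A σ}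

theorem IsBestResponse.sum_boostableItems_le {i : Fin n} (hbr : IsBestResponse A σ i) (hh : 0 < h)
    (hα : 1 < α) (hγ : 0 < γ) (hB : 0 < A.B i) (hi₁ : i ∈ I1 A σ α γ) (hi₂ : i ∈ I2 A σ α) :
    ∑ j ∈ boostableItems A σ α γ i, (A.v i j - pbar A σ α j) * q A σ i j ≤
      2 * α / (γ * (α - 1)) * ∑ j, A.v i j * q A σ i j := by
  have hα₀ : 0 < α := one_pos.trans hα
  have hα₁ : 0 < α - 1 := sub_pos.2 hα
  have hmem : ∀ j ∈ boostableItems A σ α γ i, pbar A σ α j < A.v i j ∧ γ * q A σ i j ≤ 1 :=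
    fun j hj => (mem_filter.1 hj).2
  have hafford : ∑ j ∈ boostableItems A σ α γ i, γ * q A σ i j * pbar A σ α j ≤ A.B i := by
    refine le_trans ?_ (mem_filter.1 hi₁).2
    rw [mul_sum]
    simp only [mul_assoc, mul_comm (pbar A σ α _)]
    exact sum_le_sum_of_subset_of_nonneg
      (fun j hj => mem_filter.2 ⟨mem_univ j, (hmem j hj).1.le⟩)
      fun j _ _ => mul_nonneg hγ.le (mul_nonneg (q_nonneg A σ i j) (pbar_nonneg A σ hα₀.le j))
  have hboost := hbr.sum_fraction_mul_value_sub_pbar_le hh hα.le hB hi₂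
    (fun j _ => mul_nonneg hγ.le (q_nonneg A σ i j)) (fun j hj => (hmem j hj).2)
    (fun j hj => (hmem j hj).1) hafford
  rw [div_mul_eq_mul_div, le_div_iff₀' (by positivity)]
  calc γ * (α - 1) * ∑ j ∈ boostableItems A σ α γ i, (A.v i j - pbar A σ α j) * q A σ i j
      = α * ((1 - 1 / α) *
          ∑ j ∈ boostableItems A σ α γ i, γ * q A σ i j * (A.v i j - pbar A σ α j)) := by
        simp only [mul_sum]
        exact sum_congr rfl fun j _ => by field_simp
    _ ≤ α * (2 * ∑ j, A.v i j * q A σ i j) := by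
        refine mul_le_mul_of_nonneg_left (hboost.trans ?_) hα₀.le
        exact mul_le_mul_of_nonneg_left (expect_util_le A σ i) zero_le_two
    _ = 2 * α * ∑ j, A.v i j * q A σ i j := by ring

variable (A σ)

theorem sum_value_mul_q_le_add_boostableItems (hα : 0 ≤ α) (γ : ℝ) (i : Fin n) :
    ∑ j, A.v i j * q A σ i j ≤ ∑ j, pbar A σ α j * q A σ i j +
      ∑ j ∈ boostableItems A σ α γ i, (A.v i j - pbar A σ α j) * q A σ i j +
      ∑ j with 1 < γ * q A σ i j, A.v i j * q A σ i j := by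
  simp only [boostableItems, sum_filter, ← sum_add_distrib]
  refine sum_le_sum fun j _ => ?_
  have hq := q_nonneg A σ i j
  have hpq := mul_nonneg (pbar_nonneg A σ hα j) hq
  rcases le_or_gt (γ * q A σ i j) 1 with hsmall | hlarge
  · rcases le_or_gt (A.v i j) (pbar A σ α j) with hcheap | hvaluable
    · simpa [hsmall, hcheap.not_gt, hsmall.not_gt] using mul_le_mul_of_nonneg_right hcheap hq
    · simp [hvaluable, hsmall, hsmall.not_gt, sub_mul]
  · simpa [hlarge, hlarge.not_ge] using hpq

theorem sum_sum_pbar_mul_q_le (hα : 0 < α) (S : Finset (Fin n)) :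
    ∑ i ∈ S, ∑ j, pbar A σ α j * q A σ i j ≤ α * REV A σ α := by
  have hp := pbar_nonneg A σ hα.le
  calc ∑ i ∈ S, ∑ j, pbar A σ α j * q A σ i j
      ≤ ∑ i, ∑ j, pbar A σ α j * q A σ i j :=
        sum_le_univ_sum_of_nonneg fun i => sum_nonneg fun j _ =>
          mul_nonneg (hp j) (q_nonneg A σ i j)
    _ = ∑ j, pbar A σ α j * ∑ i, q A σ i j := by
        rw [sum_comm]
        simp only [mul_sum]
    _ ≤ ∑ j, pbar A σ α j :=
        sum_le_sum fun j _ => mul_le_of_le_one_right (hp j) (sum_q_le_one A σ j)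
    _ = α * REV A σ α := by rw [REV, ← mul_assoc, mul_one_div_cancel hα.ne', one_mul]

theorem inv_mul_sum_budget_le (hγ : 0 < γ) :
    1 / γ * ∑ i ∈ univ \ I3 A σ γ, A.B i ≤ 2 * ∑ i ∈ univ \ I3 A σ γ, liquidValue A σ i := by
  rw [mul_sum, mul_sum]
  refine sum_le_sum fun i hi => ?_
  have hQ : 1 / (2 * γ) < Qbig A σ i := by simpa [I3] using hi
  calc 1 / γ * A.B i = 2 * (1 / (2 * γ) * A.B i) := by field_simp
    _ ≤ 2 * (Qbig A σ i * A.B i) := by gcongr; exact A.B_nonneg i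
    _ ≤ 2 * liquidValue A σ i := by gcongr; exact Qbig_mul_budget_le_liquidValue A σ i

theorem sum_Iset_add_sum_compl_I3_le_LW (α γ : ℝ) :
    ∑ i ∈ Iset A σ α γ, liquidValue A σ i + ∑ i ∈ univ \ I3 A σ γ, liquidValue A σ i ≤
      LW A σ := by
  have hdisj : Disjoint (Iset A σ α γ) (univ \ I3 A σ γ) :=
    disjoint_sdiff.mono_left inter_subset_right
  rw [← sum_union hdisj]
  exact sum_le_univ_sum_of_nonneg (liquidValue_nonneg A σ)

variable {A σ}

theorem IsBestResponse.mul_sum_value_mul_q_le {i : Fin n} (hbr : IsBestResponse A σ i) (hh : 0 < h)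
    (hα : 1 < α) (hγ : 0 < γ) (hi : i ∈ Iset A σ α γ) :
    (1 - 2 * α / (γ * (α - 1))) * ∑ j, A.v i j * q A σ i j ≤
      ∑ j, pbar A σ α j * q A σ i j + 2 * liquidValue A σ i := by
  obtain ⟨⟨hi₁, hi₂⟩, hi₃⟩ : (i ∈ I1 A σ α γ ∧ i ∈ I2 A σ α) ∧ i ∈ I3 A σ γ := by
    simpa only [Iset, mem_inter] using hi
  have hα₀ : 0 < α := one_pos.trans hα
  have hQ : Qbig A σ i ≤ 1 / (2 * γ) := (mem_filter.1 hi₃).2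
  rcases le_or_gt 1 (2 * α / (γ * (α - 1))) with hcoef | hcoef
  · exact (mul_nonpos_of_nonpos_of_nonneg (sub_nonpos.2 hcoef)
      (sum_nonneg fun j _ => mul_nonneg (A.v_nonneg i j) (q_nonneg A σ i j))).trans
      (add_nonneg (sum_nonneg fun j _ => mul_nonneg (pbar_nonneg A σ hα₀.le j) (q_nonneg A σ i j))
        (mul_nonneg zero_le_two (liquidValue_nonneg A σ i)))
  have hγ_gt : 1 < 2 * γ := by
    rw [div_lt_one (mul_pos hγ (sub_pos.2 hα))] at hcoef
    nlinarith
  have hB : 0 < A.B i :=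
    budget_pos_of_Qbig_lt_one A σ (hQ.trans_lt ((div_lt_one (by positivity)).2 hγ_gt))
  have hboost := hbr.sum_boostableItems_le hh hα hγ hB hi₁ hi₂
  have hlarge : ∑ j with 1 < γ * q A σ i j, A.v i j * q A σ i j ≤ 2 * liquidValue A σ i := by
    refine sum_mul_q_le_two_mul_liquidValue A σ fun j hj => ?_
    calc 2 * Qbig A σ i ≤ 2 * (1 / (2 * γ)) := by gcongr
      _ = 1 / γ := by field_simp
      _ ≤ q A σ i j := (div_le_iff₀' hγ).2 (mem_filter.1 hj).2.le
  linarith [sum_value_mul_q_le_add_boostableItems A σ hα₀.le γ i]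

end

theorem gamma_boosting_deviation_general {n m h : ℕ} (hh : 0 < h) {α γ : ℝ} (hα : 1 < α)
    (hγ : 0 < γ) (A : ShareAuction n m h) (σ : MixedProfile n m h)
    (hbr : ∀ i ∈ Iset A σ α γ, IsBestResponse A σ i) :
    (1 - 2 * α / (γ * (α - 1))) *
        ∑ i ∈ Iset A σ α γ, ∑ j : Fin m, A.v i j * q A σ i j ≤
      α * REV A σ α + 2 * LW A σ - (1 / γ) * ∑ i ∈ univ \ I3 A σ γ, A.B i := by
  have hbidders : (1 - 2 * α / (γ * (α - 1))) *
      ∑ i ∈ Iset A σ α γ, ∑ j : Fin m, A.v i j * q A σ i j ≤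
        ∑ i ∈ Iset A σ α γ, ∑ j, pbar A σ α j * q A σ i j +
          2 * ∑ i ∈ Iset A σ α γ, liquidValue A σ i := by
    rw [mul_sum, mul_sum, ← sum_add_distrib]
    exact sum_le_sum fun i hi => (hbr i hi).mul_sum_value_mul_q_le hh hα hγ hi
  have hrevenue := sum_sum_pbar_mul_q_le A σ (one_pos.trans hα) (Iset A σ α γ)
  have hbudgets := inv_mul_sum_budget_le A σ hγ
  have hwelfare := sum_Iset_add_sum_compl_I3_le_LW A σ α γ
  linarith

/-- **γ-boosting deviation lemma**: the value derived by bidders in `I` is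
comparable to the expected Liquid Welfare at equilibrium:
`(1 − 2α/(γ(α−1))) Σ_{i∈I} Σ_j v_{ij} q_{ij} ≤ α REV(σ) + 2 LW(σ) − (1/γ) Σ_{i∈Ī₃} B_i`. -/
theorem gamma_boosting_deviation {n m h : ℕ} (hh : 0 < h)
    (α γ : ℝ) (hα : 1 < α) (hγ : 1 < γ)
    (A : ShareAuction n m h) (σ : MixedProfile n m h) (hNash : IsMixedNash A σ) :
    (1 - 2 * α / (γ * (α - 1))) *
        ∑ i ∈ Iset A σ α γ, ∑ j : Fin m, A.v i j * q A σ i j ≤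
      α * REV A σ α + 2 * LW A σ - (1 / γ) * ∑ i ∈ univ \ I3 A σ γ, A.B i := by
  exact gamma_boosting_deviation_general hh hα (one_pos.trans hγ) A σ fun i _ => hNash.2 i
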